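/- arXiv:math/0506443 — 4 statements merged into one kernel-verified Lean document; each statement's English description precedes it below -/
import Mathlib

section
/- The subgroup of SL(2,ℤ) generated by the matrices A = [[1,1],[0,1]] and B³ = [[1,0],[-3,1]] has finite index in SL(2,ℤ). -/
/-- The matrix `A = [[1,1],[0,1]]` as an element of `SL(2,ℤ)`. -/
def A : Matrix.SpecialLinearGroup (Fin 2) ℤ :=
  ⟨!![1, 1; 0, 1], by norm_num [Matrix.det_fin_two_of]⟩

/-- The matrix `B = [[1,0],[-1,1]]` as an element of `SL(2,ℤ)`. -/
def B : Matrix.SpecialLinearGroup (Fin 2) ℤ :=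
  ⟨!![1, 0; -1, 1], by norm_num [Matrix.det_fin_two_of]⟩

theorem A_zpow_coe (k : ℤ) : ((A ^ k : Matrix.SpecialLinearGroup (Fin 2) ℤ) :
    Matrix (Fin 2) (Fin 2) ℤ) = !![1, k; 0, 1] := by
  have h : A = ModularGroup.T := rfl
  rw [h, ModularGroup.coe_T_zpow]

theorem B_zpow_coe (k : ℤ) : ((B ^ k : Matrix.SpecialLinearGroup (Fin 2) ℤ) :
    Matrix (Fin 2) (Fin 2) ℤ) = !![1, 0; -k, 1] := by
  have h : B = ModularGroup.S * ModularGroup.T * ModularGroup.S⁻¹ := by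
    decide
  rw [h, conj_zpow]
  rw [Matrix.SpecialLinearGroup.coe_mul, Matrix.SpecialLinearGroup.coe_mul,
    ModularGroup.coe_T_zpow, Matrix.SpecialLinearGroup.coe_inv, ModularGroup.coe_S,
    Matrix.adjugate_fin_two]
  simp

theorem near_mul (x c : ℤ) (hc : c ≠ 0) : ∃ k : ℤ, 2 * |x + k * c| ≤ |c| := by
  have h1 := Int.emod_nonneg x hc
  have h2 := Int.emod_lt_abs x hc
  have h3 := Int.emod_add_mul_ediv x c
  by_cases h : 2 * (x % c) ≤ |c|
  · refine ⟨-(x / c), ?_⟩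
    have : x + -(x / c) * c = x % c := by linarith
    rw [this, abs_of_nonneg h1]; exact h
  · obtain ⟨s, hs⟩ : ∃ s : ℤ, |c| = s * c := by
      rcases abs_choice c with h | h
      · exact ⟨1, by linarith⟩
      · exact ⟨-1, by linarith⟩
    refine ⟨-(x / c) - s, ?_⟩
    have : x + (-(x / c) - s) * c = x % c - |c| := by rw [hs]; linarith
    rw [this, abs_of_nonpos (by linarith)]; linarith

theorem descent (n : ℕ) : ∀ g : Matrix.SpecialLinearGroup (Fin 2) ℤ,
    (g 1 0).natAbs ≤ n → (3 : ℤ) ∣ g 1 0 → (3 : ℤ) ∣ g 0 0 - 1 →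
    g ∈ Subgroup.closure ({A, B ^ 3} : Set (Matrix.SpecialLinearGroup (Fin 2) ℤ)) := by
  have hA : A ∈ Subgroup.closure ({A, B ^ 3} : Set (Matrix.SpecialLinearGroup (Fin 2) ℤ)) :=
    Subgroup.subset_closure (by simp)
  have hB : B ^ 3 ∈ Subgroup.closure ({A, B ^ 3} : Set (Matrix.SpecialLinearGroup (Fin 2) ℤ)) :=
    Subgroup.subset_closure (by simp)
  induction n using Nat.strong_induction_on with
  | _ n ih =>
  intro g hn hc ha
  have hdet := g.det_coe
  rw [Matrix.det_fin_two] at hdet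
  by_cases h0 : g 1 0 = 0
  · rw [h0] at hdet
    have h1 : g 0 0 * g 1 1 = 1 := by linarith
    have h2 : g 0 0 = 1 := by
      rcases Int.eq_one_or_neg_one_of_mul_eq_one h1 with h | h
      · exact h
      · rw [h] at ha; norm_num at ha
    have h3 : g 1 1 = 1 := by rw [h2] at h1; linarith
    have : g = A ^ (g 0 1) := by
      ext i j
      rw [A_zpow_coe]
      fin_cases i <;> fin_cases j <;> simp [h0, h2, h3]
    rw [this]
    exact Subgroup.zpow_mem _ hA _
  · obtain ⟨k, hk⟩ := near_mul (g 0 0) (g 1 0) h0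
    have ha' : (3 : ℤ) ∣ g 0 0 + k * g 1 0 - 1 := by
      have := dvd_add ha (Dvd.dvd.mul_left hc k)
      omega
    have hne : 3 * (g 0 0 + k * g 1 0) ≠ 0 := by omega
    obtain ⟨m, hm⟩ := near_mul (g 1 0) _ hne
    set g' := (B ^ 3) ^ (-m) * (A ^ k * g) with hg'
    have e : (B ^ 3) ^ (-m) = B ^ (3 * -m) := by
      rw [zpow_mul]; norm_cast
    have e00 : g' 0 0 = g 0 0 + k * g 1 0 := by
      rw [hg', e]
      simp only [Matrix.SpecialLinearGroup.coe_mul, A_zpow_coe, B_zpow_coe]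
      simp [Matrix.mul_apply, Fin.sum_univ_two, Matrix.vecMul, dotProduct]
    have e10 : g' 1 0 = g 1 0 + m * (3 * (g 0 0 + k * g 1 0)) := by
      rw [hg', e]
      simp only [Matrix.SpecialLinearGroup.coe_mul, A_zpow_coe, B_zpow_coe]
      simp [Matrix.mul_apply, Fin.sum_univ_two, Matrix.vecMul, dotProduct]
      ring
    have hlt : (g' 1 0).natAbs < (g 1 0).natAbs := by
      rw [← e10, abs_mul] at hm
      have : 0 < |g 1 0| := abs_pos.mpr h0
      zify
      norm_num at hm
      linarith
    have hmem := ih _ (lt_of_lt_of_le hlt hn) g' le_rfl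
      (by rw [e10]; exact dvd_add hc (Dvd.dvd.mul_left (dvd_mul_right _ _) _))
      (by rw [e00]; exact ha')
    rw [hg', Subgroup.mul_mem_cancel_left _ (Subgroup.zpow_mem _ hB _),
      Subgroup.mul_mem_cancel_left _ (Subgroup.zpow_mem _ hA _)] at hmem
    exact hmem

/-- The subgroup of `SL(2,ℤ)` generated by `A` and `B³` has finite index. -/
theorem subgroup_A_Bcubed_finiteIndex :
    (Subgroup.closure ({A, B ^ 3} : Set (Matrix.SpecialLinearGroup (Fin 2) ℤ))).FiniteIndex := by
  have := (CongruenceSubgroup.Gamma_is_cong_sub 3).finiteIndex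
  refine Subgroup.finiteIndex_of_le (H := CongruenceSubgroup.Gamma 3) ?_
  intro g hg
  rw [CongruenceSubgroup.Gamma_mem] at hg
  obtain ⟨h1, -, h3, -⟩ := hg
  refine descent _ g le_rfl ((ZMod.intCast_zmod_eq_zero_iff_dvd _ 3).mp h3)
    ((ZMod.intCast_zmod_eq_zero_iff_dvd _ 3).mp ?_)
  push_cast
  rw [h1, sub_self]
end

section
/- The subgroup of SL(2,ℤ) generated by the matrices A = [[1,1],[0,1]] and B³ = [[1,0],[-3,1]] has index exactly 8 in SL(2,ℤ). -/
open Matrix in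
/-- The action of `SL(2,ℤ)` on column vectors mod 3. -/
@[reducible] def actMod3 : MulAction (Matrix.SpecialLinearGroup (Fin 2) ℤ) (Fin 2 → ZMod 3) where
  smul g v := ![(g 0 0 : ZMod 3) * v 0 + (g 0 1 : ZMod 3) * v 1,
    (g 1 0 : ZMod 3) * v 0 + (g 1 1 : ZMod 3) * v 1]
  one_smul v := by
    ext i
    change ![_, _] i = _
    fin_cases i <;> simp
  mul_smul g h v := by
    ext i
    change ![_, _] i = ![_ * ![_, _] 0 + _ * ![_, _] 1, _ * ![_, _] 0 + _ * ![_, _] 1] i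
    fin_cases i <;> simp [Matrix.mul_apply, Fin.sum_univ_two] <;> ring

lemma A_zpow (k : ℤ) : (A ^ k).1 = !![1, k; 0, 1] := by
  have : A = ModularGroup.T := by ext i j; fin_cases i <;> fin_cases j <;> rfl
  rw [this]; exact ModularGroup.coe_T_zpow k

lemma B_zpow (k : ℤ) : (B ^ k).1 = !![1, 0; -k, 1] := by
  induction k using Int.induction_on with
  | zero => ext i j; fin_cases i <;> fin_cases j <;> simp
  | succ n h =>
    rw [zpow_add, zpow_one, Matrix.SpecialLinearGroup.coe_mul, h]
    ext i j; fin_cases i <;> fin_cases j <;> simp [B, Matrix.mul_apply, Fin.sum_univ_two]; ring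
  | pred n h =>
    rw [zpow_sub, zpow_one, Matrix.SpecialLinearGroup.coe_mul, h, Matrix.SpecialLinearGroup.coe_inv]
    ext i j; fin_cases i <;> fin_cases j <;>
      simp [B, Matrix.mul_apply, Fin.sum_univ_two, Matrix.adjugate_fin_two]; ring

lemma B3_zpow (k : ℤ) : ((B ^ 3) ^ k).1 = !![1, 0; -(3 * k), 1] := by
  rw [← B_zpow, zpow_mul]; rfl

lemma exists_red (a c : ℤ) (hc : c ≠ 0) : ∃ k : ℤ, 2 * |a + k * c| ≤ |c| := by
  have h1 := Int.emod_nonneg a hc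
  have h2 := Int.emod_lt_abs a hc
  have h3 := Int.emod_add_mul_ediv a c
  by_cases h : 2 * (a % c) ≤ |c|
  · refine ⟨-(a / c), ?_⟩
    have : a + -(a / c) * c = a % c := by linarith
    rw [this, abs_of_nonneg h1]; exact h
  · refine ⟨-(a / c) - SignType.sign c, ?_⟩
    have : a + (-(a / c) - SignType.sign c) * c = a % c - |c| := by
      have := sign_mul_self c
      linarith
    rw [this, abs_of_neg (by linarith)]; linarith

abbrev HH := Subgroup.closure ({A, B ^ 3} : Set (Matrix.SpecialLinearGroup (Fin 2) ℤ))

lemma mem_HH (n : ℕ) : ∀ g : Matrix.SpecialLinearGroup (Fin 2) ℤ, (g 1 0).natAbs ≤ n →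
    (3 : ℤ) ∣ g 1 0 → (3 : ℤ) ∣ g 0 0 - 1 → g ∈ HH := by
  have hA : A ∈ HH := Subgroup.subset_closure (by simp)
  have hB : B ^ 3 ∈ HH := Subgroup.subset_closure (by simp)
  induction n using Nat.strong_induction_on with
  | _ n ih =>
  intro g hn h10 h00
  have hdet := g.2
  rw [Matrix.det_fin_two] at hdet
  change g 0 0 * g 1 1 - g 0 1 * g 1 0 = 1 at hdet
  by_cases hc : g 1 0 = 0
  · rw [hc, mul_zero, sub_zero] at hdet
    have : g 0 0 = 1 ∧ g 1 1 = 1 := by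
      rcases Int.mul_eq_one_iff_eq_one_or_neg_one.1 hdet with h | h
      · exact h
      · omega
    have hg : g = A ^ (g 0 1) := by
      apply Subtype.ext
      rw [A_zpow]
      ext i j; fin_cases i <;> fin_cases j
      · exact this.1
      · rfl
      · exact hc
      · exact this.2
    rw [hg]; exact HH.zpow_mem hA _
  · obtain ⟨k, hk⟩ := exists_red (g 0 0) (g 1 0) hc
    set a := g 0 0 + k * g 1 0 with ha
    have ha3 : (3 : ℤ) ∣ a - 1 := by
      have : a - 1 = (g 0 0 - 1) + k * g 1 0 := by rw [ha]; ring
      rw [this]; exact dvd_add h00 (h10.mul_left k)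
    have ha0 : 3 * a ≠ 0 := by omega
    obtain ⟨l, hl⟩ := exists_red (g 1 0) (3 * a) ha0
    have e : ((B ^ 3) ^ (-l) * (A ^ k * g)).1 =
        !![a, g 0 1 + k * g 1 1; g 1 0 + l * (3 * a),
          3 * l * (g 0 1 + k * g 1 1) + g 1 1] := by
      rw [Matrix.SpecialLinearGroup.coe_mul, Matrix.SpecialLinearGroup.coe_mul, A_zpow, B3_zpow]
      ext i j; fin_cases i <;> fin_cases j <;>
        simp [Matrix.vecMul, dotProduct, Fin.sum_univ_two, ha] <;> ring
    set g' := (B ^ 3) ^ (-l) * (A ^ k * g) with hg'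
    have e10 : g' 1 0 = g 1 0 + l * (3 * a) := by
      change g'.1 1 0 = _
      rw [e]; rfl
    have e00 : g' 0 0 = a := by
      change g'.1 0 0 = _
      rw [e]; rfl
    have hm : g' ∈ HH := by
      refine ih (g' 1 0).natAbs ?_ g' le_rfl ?_ ?_
      · rw [e10]
        have : |3 * a| = 3 * |a| := by rw [abs_mul]; rfl
        have := abs_pos.2 hc
        have h4 := Int.natCast_natAbs (g 1 0)
        have h5 := Int.natCast_natAbs (g 1 0 + l * (3 * a))
        have : 2 * |a| ≤ |g 1 0| := hk
        zify
        have h6 : ((g 1 0).natAbs : ℤ) ≤ n := by exact_mod_cast hn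
        linarith
      · rw [e10]; exact dvd_add h10 ((dvd_mul_right 3 a).mul_left l)
      · rw [e00]; exact ha3
    rw [hg'] at hm
    exact (HH.mul_mem_cancel_left (HH.zpow_mem hA _)).1
      ((HH.mul_mem_cancel_left (HH.zpow_mem hB _)).1 hm)

/-- The subgroup of `SL(2,ℤ)` generated by `A` and `B³` has index exactly 8. -/
theorem subgroup_A_Bcubed_index_eq_eight :
    (Subgroup.closure ({A, B ^ 3} : Set (Matrix.SpecialLinearGroup (Fin 2) ℤ))).index = 8 := by
  let _ := actMod3
  have hs : ∀ (g : Matrix.SpecialLinearGroup (Fin 2) ℤ) (v : Fin 2 → ZMod 3), g • v =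
    ![(g 0 0 : ZMod 3) * v 0 + (g 0 1 : ZMod 3) * v 1,
    (g 1 0 : ZMod 3) * v 0 + (g 1 1 : ZMod 3) * v 1] := fun _ _ => rfl
  have key : HH = MulAction.stabilizer (Matrix.SpecialLinearGroup (Fin 2) ℤ)
      (![1, 0] : Fin 2 → ZMod 3) := by
    apply le_antisymm
    · rw [Subgroup.closure_le]
      rintro g (rfl | rfl)
      · change _ • _ = _
        rw [hs]; decide
      · change _ • _ = _
        rw [hs]; decide
    · intro g hg
      change _ • _ = _ at hg
      rw [hs] at hg
      have h0 := congrFun hg 0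
      have h1 := congrFun hg 1
      simp at h0 h1
      refine mem_HH _ g le_rfl ?_ ?_
      · exact (ZMod.intCast_zmod_eq_zero_iff_dvd _ 3).1 h1
      · refine (ZMod.intCast_zmod_eq_zero_iff_dvd _ 3).1 ?_
        push_cast; rw [h0]; ring
  change HH.index = 8
  rw [key, MulAction.index_stabilizer]
  have ho : MulAction.orbit (Matrix.SpecialLinearGroup (Fin 2) ℤ) (![1, 0] : Fin 2 → ZMod 3)
      = ((Finset.univ.filter (fun v : Fin 2 → ZMod 3 => v ≠ 0) : Finset _) : Set _) := by
    ext v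
    simp only [Finset.coe_filter, Finset.mem_univ, true_and, Set.mem_ofPred_eq]
    constructor
    · rintro ⟨g, rfl⟩ h
      have hz : ∀ g : Matrix.SpecialLinearGroup (Fin 2) ℤ, g • (0 : Fin 2 → ZMod 3) = 0 := by
        intro g; rw [hs]; ext i; fin_cases i <;> simp
      have h' : g • (![1, 0] : Fin 2 → ZMod 3) = 0 := h
      have h2 := congrArg (g⁻¹ • ·) h'
      simp only [inv_smul_smul, hz] at h2
      exact absurd h2 (by decide)
    · intro hv
      have : ∀ v : Fin 2 → ZMod 3, v ≠ 0 → ∃ l i j : Fin 3,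

        v = ![1 - (i.val : ZMod 3) * (j.val : ZMod 3),
          -(l.val : ZMod 3) * (1 - (i.val : ZMod 3) * (j.val : ZMod 3)) - (j.val : ZMod 3)] := by decide
      obtain ⟨l, i, j, h⟩ := this v hv
      refine ⟨B ^ (l.val : ℤ) * (A ^ (i.val : ℤ) * B ^ (j.val : ℤ)), ?_⟩
      change _ • _ = _
      rw [mul_smul, mul_smul, hs, hs, hs, h]
      have hA : ∀ (k : ℤ) a b, (A ^ k) a b = !![1, k; 0, 1] a b := fun k a b => by
        rw [← A_zpow]
      have hB : ∀ (k : ℤ) a b, (B ^ k) a b = !![1, 0; -k, 1] a b := fun k a b => by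
        rw [← B_zpow]
      simp only [hA, hB]
      ext i; fin_cases i <;> simp <;> ring
  rw [ho, Set.ncard_coe_finset]
  decide
end

section
/- There exists a group homomorphism φ from SL(2,ℤ) to the cyclic group ℤ/12ℤ such that φ(A) = 1 and φ(B) = 1, where A = [[1,1],[0,1]] and B = [[1,0],[-1,1]]. -/
def chiF {R : Type} [CommRing R] (a b c d : R) : R :=
  (1 - c * c) * (b * d + 3 * (c - 1) * d + c + 3) + c * (a + d - 3)

lemma chi_three : ∀ a b c d : ZMod 3, a * d - b * c = 1 → ∀ e f g h : ZMod 3, e * h - f * g = 1 →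
    chiF (a * e + b * g) (a * f + b * h) (c * e + d * g) (c * f + d * h)
      = chiF a b c d + chiF e f g h := by
  unfold chiF
  decide +kernel

lemma chi_four : ∀ a b c d : ZMod 4, a * d - b * c = 1 → ∀ e f g h : ZMod 4, e * h - f * g = 1 →
    chiF (a * e + b * g) (a * f + b * h) (c * e + d * g) (c * f + d * h)
      = chiF a b c d + chiF e f g h := by
  unfold chiF
  decide +kernel

lemma chi_int (a b c d e f g h : ℤ) (h1 : a * d - b * c = 1) (h2 : e * h - f * g = 1) :
    ((chiF (a * e + b * g) (a * f + b * h) (c * e + d * g) (c * f + d * h) : ℤ) : ZMod 12)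
      = ((chiF a b c d : ℤ) : ZMod 12) + ((chiF e f g h : ℤ) : ZMod 12) := by
  have k3 := chi_three a b c d (by exact_mod_cast congrArg (Int.cast : ℤ → ZMod 3) h1)
    e f g h (by exact_mod_cast congrArg (Int.cast : ℤ → ZMod 3) h2)
  have k4 := chi_four a b c d (by exact_mod_cast congrArg (Int.cast : ℤ → ZMod 4) h1)
    e f g h (by exact_mod_cast congrArg (Int.cast : ℤ → ZMod 4) h2)
  unfold chiF at *
  have k3' := (ZMod.intCast_eq_intCast_iff_dvd_sub _ _ 3).1 (by exact_mod_cast k3)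
  have k4' := (ZMod.intCast_eq_intCast_iff_dvd_sub _ _ 4).1 (by exact_mod_cast k4)
  rw [← Int.cast_add, ZMod.intCast_eq_intCast_iff_dvd_sub]
  push_cast at k3' k4' ⊢
  generalize (_ - _ : ℤ) = x at k3' k4' ⊢
  omega

/-- There is a homomorphism `SL(2,ℤ) → ℤ/12ℤ` sending both `A` and `B` to `1`. -/
theorem exists_hom_to_zmod_twelve :
    ∃ φ : Matrix.SpecialLinearGroup (Fin 2) ℤ →* Multiplicative (ZMod 12),
      φ A = Multiplicative.ofAdd (1 : ZMod 12) ∧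
      φ B = Multiplicative.ofAdd (1 : ZMod 12) := by
  refine ⟨MonoidHom.mk' (fun M => Multiplicative.ofAdd
    ((chiF (M.1 0 0) (M.1 0 1) (M.1 1 0) (M.1 1 1) : ℤ) : ZMod 12)) ?_, ?_, ?_⟩
  · intro M N
    rw [← ofAdd_add, ← chi_int]
    · simp [Matrix.mul_apply, Fin.sum_univ_two]
    · rw [← Matrix.det_fin_two]; exact M.2
    · rw [← Matrix.det_fin_two]; exact N.2
  · simp [A, chiF]
  · simp [B, chiF]
    rfl
end

section
/- In SL(2,ℤ), with A = [[1,1],[0,1]] and B = [[1,0],[-1,1]], for every natural number n the trace of the matrix (A⁻¹B)¹² · B¹²ⁿ is strictly greater than 3. -/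
theorem B_pow_coe (m : ℕ) :
    ((B ^ m : Matrix.SpecialLinearGroup (Fin 2) ℤ) : Matrix (Fin 2) (Fin 2) ℤ)
      = !![1, 0; -(m : ℤ), 1] := by
  induction m with
  | zero => ext i j; fin_cases i <;> fin_cases j <;> simp
  | succ k ih =>
    rw [pow_succ, Matrix.SpecialLinearGroup.coe_mul, ih]
    ext i j
    fin_cases i <;> fin_cases j <;> simp [B, Matrix.mul_apply, Fin.sum_univ_two]
    ring

theorem AB_coe :
    ((A⁻¹ * B : Matrix.SpecialLinearGroup (Fin 2) ℤ) : Matrix (Fin 2) (Fin 2) ℤ)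
      = !![2, -1; -1, 1] := by
  rw [Matrix.SpecialLinearGroup.coe_mul, Matrix.SpecialLinearGroup.coe_inv]
  simp [A, B, Matrix.adjugate_fin_two_of]

theorem AB_pow_coe :
    (((A⁻¹ * B) ^ 12 : Matrix.SpecialLinearGroup (Fin 2) ℤ) : Matrix (Fin 2) (Fin 2) ℤ)
      = !![75025, -46368; -46368, 28657] := by
  rw [Matrix.SpecialLinearGroup.coe_pow, AB_coe]
  simp [pow_succ]

/-- For every natural number `n`, the trace of `(A⁻¹B)¹² · B¹²ⁿ` is greater than 3. -/
theorem trace_fn_gt_three (n : ℕ) :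
    3 < Matrix.trace (((A⁻¹ * B) ^ 12 * B ^ (12 * n) :
      Matrix.SpecialLinearGroup (Fin 2) ℤ) : Matrix (Fin 2) (Fin 2) ℤ) := by
  rw [Matrix.SpecialLinearGroup.coe_mul, AB_pow_coe, B_pow_coe, Matrix.trace_fin_two]
  simp [Matrix.mul_apply, Fin.sum_univ_two]
  have : (0 : ℤ) ≤ n := Int.natCast_nonneg n
  linarith
end
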